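/- Let y₁, …, y_k be nonnegative real numbers. Then there exist a natural number n and real numbers x₁, …, x_n such that: each x_j is nonnegative and lies in the ℚ-linear span of {y₁, …, y_k}; the family x₁, …, x_n is linearly independent over ℚ; and every y_i is a nonnegative integer combination of x₁, …, x_n. -/

import Mathlib

/-- `x'` refines `x`. -/
def Refines {n : ℕ} (x x' : Fin n → ℝ) : Prop :=
  (∀ j, 0 ≤ x' j) ∧ (∀ j, x' j ∈ Submodule.span ℚ (Set.range x)) ∧
    (∀ j, x j ∈ Submodule.span ℕ (Set.range x'))

theorem Refines.self {n : ℕ} {x : Fin n → ℝ} (hx : ∀ j, 0 ≤ x j) : Refines x x :=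
  ⟨hx, fun j => Submodule.subset_span ⟨j, rfl⟩, fun j => Submodule.subset_span ⟨j, rfl⟩⟩

theorem Refines.comp {n : ℕ} {x y z : Fin n → ℝ} (h : Refines x y) (h' : Refines y z) :
    Refines x z := by
  refine ⟨h'.1, fun j => ?_, fun j => ?_⟩
  · refine (Submodule.span_le.2 ?_) (h'.2.1 j)
    rintro _ ⟨i, rfl⟩
    exact h.2.1 i
  · refine (Submodule.span_le.2 ?_) (h.2.2 j)
    rintro _ ⟨i, rfl⟩
    exact h'.2.2 i

theorem refines_move {n : ℕ} (x : Fin n → ℝ) (hx : ∀ j, 0 ≤ x j) (a b : Fin n) (hab : a ≠ b)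
    (h : x a ≤ x b) : Refines x (Function.update x b (x b - x a)) := by
  have key : ∀ j, j ≠ b → x j ∈ Submodule.span ℕ
      (Set.range (Function.update x b (x b - x a))) := fun j hj =>
    Submodule.subset_span ⟨j, by simp [hj]⟩
  refine ⟨fun j => ?_, fun j => ?_, fun j => ?_⟩
  · by_cases hj : j = b
    · subst hj; simpa using h
    · simpa [hj] using hx j
  · by_cases hj : j = b
    · subst hj
      simpa using Submodule.sub_mem _
        (Submodule.subset_span (R := ℚ) (Set.mem_range_self (f := x) j))
        (Submodule.subset_span (R := ℚ) (Set.mem_range_self (f := x) a))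
    · simpa [hj] using Submodule.subset_span (R := ℚ) (Set.mem_range_self (f := x) j)
  · by_cases hj : j = b
    · subst hj
      have h1 : x j - x a ∈ Submodule.span ℕ
          (Set.range (Function.update x j (x j - x a))) :=
        Submodule.subset_span ⟨j, by simp⟩
      have := Submodule.add_mem _ h1 (key a hab)
      simpa using this
    · exact key j hj

theorem sum_move {n : ℕ} (x : Fin n → ℝ) (q : Fin n → ℤ) (a b : Fin n) (hab : a ≠ b) :
    ∑ j, ((Function.update q a (q a + q b) j : ℤ) : ℝ) * Function.update x b (x b - x a) j
      = ∑ j, (q j : ℝ) * x j := by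
  have h : ∀ j, ((Function.update q a (q a + q b) j : ℤ) : ℝ) *
      Function.update x b (x b - x a) j = (q j : ℝ) * x j + (if j = a then (q b : ℝ) * x a else 0)
        - (if j = b then (q b : ℝ) * x a else 0) := by
    intro j
    by_cases h1 : j = a
    · subst h1
      simp [hab]; ring
    · by_cases h2 : j = b
      · subst h2
        simp [h1]; ring
      · simp [h1, h2]
  rw [Finset.sum_congr rfl fun j _ => h j]
  simp [Finset.sum_add_distrib, Finset.sum_sub_distrib]

def Goal {n : ℕ} (x : Fin n → ℝ) (q : Fin n → ℤ) : Prop :=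
  ∃ (x' : Fin n → ℝ) (q' : Fin n → ℤ), Refines x x' ∧
    ∑ j, (q' j : ℝ) * x' j = ∑ j, (q j : ℝ) * x j ∧ ((∀ j, 0 ≤ q' j) ∨ ∀ j, q' j ≤ 0)

theorem Goal.move {n : ℕ} (x : Fin n → ℝ) (q : Fin n → ℤ) (hx : ∀ j, 0 ≤ x j) (a b : Fin n)
    (hab : a ≠ b) (h : x a ≤ x b)
    (hg : (∀ j, 0 ≤ Function.update x b (x b - x a) j) →
      Goal (Function.update x b (x b - x a)) (Function.update q a (q a + q b))) : Goal x q := by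
  have hr := refines_move x hx a b hab h
  obtain ⟨x', q', h1, h2, h3⟩ := hg hr.1
  exact ⟨x', q', hr.comp h1, h2.trans (sum_move x q a b hab), h3⟩

theorem core {n : ℕ} : ∀ (B : ℕ) (x : Fin n → ℝ) (q : Fin n → ℤ), (∀ j, 0 ≤ x j) →
    (∀ j, |q j| ≤ B) → Goal x q := by
  intro B
  induction B with
  | zero =>
    intro x q hx hq
    refine ⟨x, q, Refines.self hx, rfl, Or.inl fun j => ?_⟩
    have := hq j
    simp at this
    simp [this]
  | succ B ihB =>
    have hc : ∀ (c : ℕ) (x : Fin n → ℝ) (q : Fin n → ℤ), (∀ j, 0 ≤ x j) →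
        (∀ j, |q j| ≤ (B + 1 : ℕ)) →
        (Finset.univ.filter fun j => |q j| = (B + 1 : ℕ)).card ≤ c → Goal x q := by
      intro c
      induction c with
      | zero =>
        intro x q hx hq hcard
        refine ihB x q hx fun j => ?_
        have h1 := hq j
        have h2 : |q j| ≠ (B + 1 : ℕ) := by
          intro h
          have : j ∈ (Finset.univ.filter fun j => |q j| = (B + 1 : ℕ)) := by simpa using h
          rw [Finset.card_eq_zero.1 (Nat.le_zero.1 hcard)] at this
          simp at this
        omega
      | succ c ihc =>
        have hd : ∀ (d : ℕ) (x : Fin n → ℝ) (q : Fin n → ℤ) (b : Fin n), (∀ j, 0 ≤ x j) →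
            (∀ j, |q j| ≤ (B + 1 : ℕ)) →
            (Finset.univ.filter fun j => |q j| = (B + 1 : ℕ)).card ≤ c + 1 →
            |q b| = (B + 1 : ℕ) →
            (Finset.univ.filter fun j => (q j < 0 ∧ 0 < q b) ∨ (0 < q j ∧ q b < 0)).card ≤ d →
            Goal x q := by
          intro d
          induction d with
          | zero =>
            intro x q b hx hq _ hb hcard
            have hb2 := abs_cases (q b)
            have h0 : ∀ j, ¬ ((q j < 0 ∧ 0 < q b) ∨ (0 < q j ∧ q b < 0)) := by
              intro j h
              have : j ∈ (Finset.univ.filter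
                  fun j => (q j < 0 ∧ 0 < q b) ∨ (0 < q j ∧ q b < 0)) := by simpa using h
              rw [Finset.card_eq_zero.1 (Nat.le_zero.1 hcard)] at this
              simp at this
            refine ⟨x, q, Refines.self hx, rfl, ?_⟩
            rcases lt_or_ge 0 (q b) with h | h
            · left; intro j; have := h0 j; omega
            · right; intro j; have := h0 j; omega
          | succ d ihd =>
            intro x q b hx hq hcc hb hcard
            have hb2 := abs_cases (q b)
            by_cases h0 : ∀ j, ¬ ((q j < 0 ∧ 0 < q b) ∨ (0 < q j ∧ q b < 0))
            · refine ⟨x, q, Refines.self hx, rfl, ?_⟩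
              rcases lt_or_ge 0 (q b) with h | h
              · left; intro j; have := h0 j; omega
              · right; intro j; have := h0 j; omega
            push Not at h0
            obtain ⟨a, ha⟩ := h0
            have hab : a ≠ b := by rintro rfl; omega
            have hqa := hq a
            have ha2 := abs_cases (q a)
            have hs2 := abs_cases (q a + q b)
            have hlt : |q a + q b| ≤ B := by omega
            have hlt2 : |q b + q a| ≤ B := by rwa [add_comm]
            rcases le_total (x a) (x b) with h | h
            · refine Goal.move x q hx a b hab h fun hx' => ihd _ _ b hx' ?_ ?_ ?_ ?_
              · intro j
                by_cases hj : j = a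
                · subst hj; simp; omega
                · simpa [hj] using hq j
              · refine le_trans (Finset.card_le_card ?_) hcc
                intro j
                by_cases hj : j = a
                · subst hj; simp; omega
                · simp [hj]
              · simpa [hab.symm] using hb
              · refine Nat.le_of_lt_succ (lt_of_lt_of_le (Finset.card_lt_card ?_) hcard)
                rw [Finset.ssubset_iff_of_subset]
                · refine ⟨a, by simpa using ha, ?_⟩
                  simp [hab.symm]; omega
                · intro j
                  by_cases hj : j = a
                  · subst hj; simp [hab.symm]; omega
                  · simp [hj, hab.symm]
            · refine Goal.move x q hx b a hab.symm h fun hx' => ihc _ _ hx' ?_ ?_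
              · intro j
                by_cases hj : j = b
                · subst hj; simp; omega
                · simpa [hj] using hq j
              · refine Nat.le_of_lt_succ (lt_of_lt_of_le (Finset.card_lt_card ?_) hcc)
                rw [Finset.ssubset_iff_of_subset]
                · refine ⟨b, by simpa using hb, ?_⟩
                  simp; omega
                · intro j
                  by_cases hj : j = b
                  · subst hj; simp; omega
                  · simp [hj]
        intro x q hx hq hcard
        by_cases hb : ∃ b, |q b| = (B + 1 : ℕ)
        · obtain ⟨b, hb⟩ := hb
          exact hd _ x q b hx hq hcard hb le_rfl
        · push Not at hb
          refine ihB x q hx fun j => ?_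
          have h1 := hq j
          have h2 := hb j
          omega
    intro x q hx hq
    exact hc _ x q hx hq le_rfl

theorem goal_all {n : ℕ} (x : Fin n → ℝ) (q : Fin n → ℤ) (hx : ∀ j, 0 ≤ x j) : Goal x q := by
  refine core (∑ j, (q j).natAbs) x q hx fun j => ?_
  rw [Int.abs_eq_natAbs]
  exact_mod_cast Finset.single_le_sum (f := fun j => (q j).natAbs) (fun _ _ => Nat.zero_le _)
    (Finset.mem_univ j)

theorem Refines.indep {n : ℕ} {x x' : Fin n → ℝ} (h : Refines x x')
    (hx : LinearIndependent ℚ x) : LinearIndependent ℚ x' := by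
  have hs : Submodule.span ℚ (Set.range x') = Submodule.span ℚ (Set.range x) := by
    apply le_antisymm
    · rw [Submodule.span_le]
      rintro _ ⟨j, rfl⟩
      exact h.2.1 j
    · rw [Submodule.span_le]
      rintro _ ⟨j, rfl⟩
      exact Submodule.span_le_restrictScalars ℕ ℚ _ (h.2.2 j)
  rw [linearIndependent_iff_card_eq_finrank_span] at hx ⊢
  rw [hx, Set.finrank, Set.finrank, hs]

theorem common_den {n : ℕ} (c : Fin n → ℚ) :
    ∃ N : ℕ, 0 < N ∧ ∃ q : Fin n → ℤ, ∀ j, c j * N = q j := by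
  refine ⟨∏ j, (c j).den, Finset.prod_pos fun j _ => (c j).pos, ?_⟩
  have : ∀ j, ∃ m : ℤ, c j * ((∏ j, (c j).den : ℕ) : ℚ) = m := by
    intro j
    obtain ⟨e, he⟩ := Finset.dvd_prod_of_mem (fun j => (c j).den) (Finset.mem_univ j)
    refine ⟨(c j).num * e, ?_⟩
    rw [he]
    push_cast
    rw [← mul_assoc, Rat.mul_den_eq_num]
  choose q hq using this
  exact ⟨q, hq⟩

theorem refine_one {n : ℕ} (x : Fin n → ℝ) (hx : ∀ j, 0 ≤ x j) (y : ℝ) (hy : 0 ≤ y)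
    (h : y ∈ Submodule.span ℚ (Set.range x)) :
    ∃ x', Refines x x' ∧ y ∈ Submodule.span ℕ (Set.range x') := by
  obtain ⟨c, hc⟩ := (Submodule.mem_span_range_iff_exists_fun ℚ).1 h
  obtain ⟨N, hN, q, hq⟩ := common_den c
  have hN' : (N : ℝ) ≠ 0 := by positivity
  have hr : Refines x (fun j => x j / N) := by
    refine ⟨fun j => div_nonneg (hx j) (by positivity), fun j => ?_, fun j => ?_⟩
    · have := Submodule.smul_mem _ (N : ℚ)⁻¹
        (Submodule.subset_span (R := ℚ) (Set.mem_range_self (f := x) j))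
      convert this using 1
      rw [Rat.smul_def]; push_cast; field_simp
    · have := Submodule.smul_mem _ N
        (Submodule.subset_span (R := ℕ) (Set.mem_range_self (f := fun j => x j / (N : ℝ)) j))
      convert this using 1
      rw [nsmul_eq_mul]; field_simp
  obtain ⟨x', q', h1, h2, h3⟩ := goal_all _ q hr.1
  have hy' : ∑ j, (q' j : ℝ) * x' j = y := by
    rw [h2, ← hc]
    refine Finset.sum_congr rfl fun j _ => ?_
    have : (c j : ℝ) * N = q j := by exact_mod_cast congrArg (Rat.cast : ℚ → ℝ) (hq j)
    rw [← this, Rat.smul_def]; field_simp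
  refine ⟨x', hr.comp h1, ?_⟩
  rcases h3 with h3 | h3
  · rw [← hy']
    refine Submodule.sum_mem _ fun j _ => ?_
    have := Submodule.smul_mem _ (q' j).toNat
      (Submodule.subset_span (R := ℕ) (Set.mem_range_self (f := x') j))
    convert this using 1
    rw [nsmul_eq_mul]
    congr 1
    exact_mod_cast (Int.toNat_of_nonneg (h3 j)).symm
  · have : y ≤ 0 := by
      rw [← hy']
      exact Finset.sum_nonpos fun j _ =>
        mul_nonpos_of_nonpos_of_nonneg (by exact_mod_cast h3 j) (h1.1 j)
    rw [le_antisymm this hy]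
    exact Submodule.zero_mem _

theorem main_aux : ∀ (k : ℕ) (y : Fin k → ℝ) (_ : ∀ i, 0 ≤ y i),
    ∃ (n : ℕ) (x : Fin n → ℝ),
      (∀ j, 0 ≤ x j ∧ x j ∈ Submodule.span ℚ (Set.range y)) ∧
      LinearIndependent ℚ x ∧
      (∀ i, y i ∈ Submodule.span ℕ (Set.range x)) := by
  intro k
  induction k with
  | zero =>
    intro y _
    exact ⟨0, Fin.elim0, fun j => j.elim0, linearIndependent_empty_type, fun i => i.elim0⟩
  | succ k ih =>
    intro y hy
    obtain ⟨n, x, h1, h2, h3⟩ := ih (fun i => y i.castSucc) (fun i => hy _)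
    have hsub : Submodule.span ℚ (Set.range fun i : Fin k => y i.castSucc) ≤
        Submodule.span ℚ (Set.range y) := by
      apply Submodule.span_mono
      rintro _ ⟨i, rfl⟩
      exact ⟨_, rfl⟩
    by_cases hl : y (Fin.last k) ∈ Submodule.span ℚ (Set.range x)
    · obtain ⟨x', hr, hyx⟩ := refine_one x (fun j => (h1 j).1) _ (hy _) hl
      refine ⟨n, x', fun j => ⟨hr.1 j, ?_⟩, hr.indep h2, fun i => ?_⟩
      · refine (Submodule.span_le.2 ?_) (hr.2.1 j)
        rintro _ ⟨i, rfl⟩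
        exact hsub (h1 i).2
      · induction i using Fin.lastCases with
        | last => exact hyx
        | cast i =>
          refine (Submodule.span_le.2 ?_) (h3 i)
          rintro _ ⟨j, rfl⟩
          exact hr.2.2 j
    · refine ⟨n + 1, Fin.snoc x (y (Fin.last k)), fun j => ?_,
        linearIndependent_finSnoc.2 ⟨h2, hl⟩, fun i => ?_⟩
      · induction j using Fin.lastCases with
        | last => simpa using ⟨hy _, Submodule.subset_span ⟨_, rfl⟩⟩
        | cast j => simpa using ⟨(h1 j).1, hsub (h1 j).2⟩
      · induction i using Fin.lastCases with
        | last => exact Submodule.subset_span ⟨Fin.last n, by simp⟩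
        | cast i =>
          refine (Submodule.span_le.2 ?_) (h3 i)
          rintro _ ⟨j, rfl⟩
          exact Submodule.subset_span ⟨j.castSucc, by simp⟩

/-- Let y₁, …, y_k be nonnegative real numbers. Then there exist a natural
number n and real numbers x₁, …, x_n such that: each x_j is nonnegative and lies in the
ℚ-linear span of {y₁, …, y_k}; the family x₁, …, x_n is linearly independent over ℚ; and
every y_i is a nonnegative integer combination of x₁, …, x_n. -/
theorem stmt_1 (k : ℕ) (y : Fin k → ℝ) (hy : ∀ i, 0 ≤ y i) :
    ∃ (n : ℕ) (x : Fin n → ℝ),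
      (∀ j, 0 ≤ x j ∧ x j ∈ Submodule.span ℚ (Set.range y)) ∧
      LinearIndependent ℚ x ∧
      (∀ i, ∃ z : Fin n → ℕ, y i = ∑ j, (z j : ℝ) * x j) := by
  obtain ⟨n, x, h1, h2, h3⟩ := main_aux k y hy
  refine ⟨n, x, h1, h2, fun i => ?_⟩
  obtain ⟨z, hz⟩ := (Submodule.mem_span_range_iff_exists_fun ℕ).1 (h3 i)
  exact ⟨z, by rw [← hz]; simp [nsmul_eq_mul]⟩
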